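/- Theorem 1 (equivalence of the weighted sum-MSE problem (10) and the simplified sum-rate problem (6)): Let the feasible set F₁₀ consist of triples (W,U,V) ∈ ℝ^{D×M} × ℝ^{D×M} × ℝ^{D×M} with w_i^m > 0 for all i,m, ∑_{m=1}^M (v_i^m)^2 ≤ P_max for all i, and ∑_{m=1}^M w_i^m e_i^m(U,V) ≤ ∑_{m=1}^M ln w_i^m + M − R_i^min for all i, with objective F(W,U,V) = ∑_{i=1}^D ∑_{m=1}^M α_i (w_i^m e_i^m(U,V) − ln w_i^m); let the feasible set F₆ consist of P = (p_i^m) ≥ 0 with ∑_m p_i^m ≤ P_max and ∑_m R_i^m(P) ≥ R_i^min for all i, with objective G(P) = ∑_m ∑_i α_i R_i^m(P). Then: (a) if (W*,U*,V*) is a global minimizer of F over F₁₀, then P* defined by p_i^{m*} = (v_i^{m*})^2 is a global maximizer of G over F₆; and (b) conversely, if P* is a global maximizer of G over F₆, then setting v_i^m = √(p_i^{m*}), u_i^m = (a_{i,i}^m v_i^m)/J_i^m with J_i^m = ∑_j (a_{i,j}^m v_j^m)^2 + σ_i^2, and w_i^m = 1/e_i^m(U,V), the triple (W,U,V) is a global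 minimizer of F over F₁₀. -/

import Mathlib

/-- Achievable rate of pair `i` on channel `m` under power allocation `P`:
`R_i^m(P) = ln(1 + SINR_i^m(P))`. -/
noncomputable def rate (D M : ℕ) (a : Fin D → Fin D → Fin M → ℝ) (σ : Fin D → ℝ)
    (P : Fin D → Fin M → ℝ) (i : Fin D) (m : Fin M) : ℝ :=
  Real.log (1 + (a i i m) ^ 2 * P i m /
    ((∑ j ∈ Finset.univ.erase i, (a i j m) ^ 2 * P j m) + (σ i) ^ 2))

/-- Mean-square error of pair `i` on channel `m` for receive scalars `U` and
square-root powers `V`. -/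
noncomputable def mse (D M : ℕ) (a : Fin D → Fin D → Fin M → ℝ) (σ : Fin D → ℝ)
    (U V : Fin D → Fin M → ℝ) (i : Fin D) (m : Fin M) : ℝ :=
  (U i m * a i i m * V i m - 1) ^ 2 +
    (∑ j ∈ Finset.univ.erase i, (U i m * a i j m * V j m) ^ 2) +
    (U i m) ^ 2 * (σ i) ^ 2

/-- Feasibility for the weighted sum-MSE problem (10). -/
noncomputable def Feas10 (D M : ℕ) (a : Fin D → Fin D → Fin M → ℝ) (σ : Fin D → ℝ)
    (Pmax : ℝ) (Rmin : Fin D → ℝ) (W U V : Fin D → Fin M → ℝ) : Prop :=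
  (∀ i m, 0 < W i m) ∧ (∀ i, ∑ m, (V i m) ^ 2 ≤ Pmax) ∧
    (∀ i, ∑ m, W i m * mse D M a σ U V i m ≤
      (∑ m, Real.log (W i m)) + M - Rmin i)

/-- Objective of the weighted sum-MSE problem (10). -/
noncomputable def objF (D M : ℕ) (a : Fin D → Fin D → Fin M → ℝ) (σ : Fin D → ℝ)
    (α : Fin D → ℝ) (W U V : Fin D → Fin M → ℝ) : ℝ :=
  ∑ i, ∑ m, α i * (W i m * mse D M a σ U V i m - Real.log (W i m))

/-- Feasibility for the simplified sum-rate problem (6). -/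
noncomputable def Feas6 (D M : ℕ) (a : Fin D → Fin D → Fin M → ℝ) (σ : Fin D → ℝ)
    (Pmax : ℝ) (Rmin : Fin D → ℝ) (P : Fin D → Fin M → ℝ) : Prop :=
  (∀ i m, 0 ≤ P i m) ∧ (∀ i, ∑ m, P i m ≤ Pmax) ∧
    (∀ i, Rmin i ≤ ∑ m, rate D M a σ P i m)

/-- Objective of the simplified sum-rate problem (6). -/
noncomputable def objG (D M : ℕ) (a : Fin D → Fin D → Fin M → ℝ) (σ : Fin D → ℝ)
    (α : Fin D → ℝ) (P : Fin D → Fin M → ℝ) : ℝ :=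
  ∑ m, ∑ i, α i * rate D M a σ P i m

/-!
For fixed powers the error `e` is a quadratic in the receive scalar `u`; completing the square
shows that its minimum over `u` is `1 / (1 + SINR)`. For a fixed error the map
`w ↦ w * e - log w` is at least `1 + log e`, with equality at `w = 1 / e`. Hence each term
`w * e - log w` is bounded below by `1 - R`, and the MMSE choice of `u` and `w` attains the bound
for all links simultaneously. Minimizing out `u` and `w` therefore turns both the objective and
the rate constraints of problem (10) into those of problem (6).
-/

section Scalar

theorem sq_mul_sub_one_add_sq_mul_eq {K : Type*} [Field K] {s n : K} (h : n + s ^ 2 ≠ 0)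
    (u : K) :
    (u * s - 1) ^ 2 + u ^ 2 * n = (n + s ^ 2) * (u - s / (n + s ^ 2)) ^ 2 + n / (n + s ^ 2) := by
  field_simp
  ring

theorem one_add_log_le_mul_sub_log {w e : ℝ} (hw : 0 < w) (he : 0 < e) :
    1 + Real.log e ≤ w * e - Real.log w := by
  have h := Real.log_le_sub_one_of_pos (mul_pos hw he)
  rw [Real.log_mul hw.ne' he.ne'] at h
  linarith

end Scalar

section Link

variable {D M : ℕ} (a : Fin D → Fin D → Fin M → ℝ) {σ : Fin D → ℝ}
  (U V : Fin D → Fin M → ℝ) {i : Fin D} (m : Fin M)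

/-- The interference plus noise at receiver `i` on channel `m`, the denominator of the SINR. As in
problem (10), the powers are given by their square roots `V`. -/
def interferenceNoise (a : Fin D → Fin D → Fin M → ℝ) (σ : Fin D → ℝ) (V : Fin D → Fin M → ℝ)
    (i : Fin D) (m : Fin M) : ℝ :=
  (∑ j ∈ Finset.univ.erase i, (a i j m * V j m) ^ 2) + σ i ^ 2

/-- The total power `J_i^m` received by `i` on channel `m`: signal, interference and noise. -/
def receivedPower (a : Fin D → Fin D → Fin M → ℝ) (σ : Fin D → ℝ) (V : Fin D → Fin M → ℝ)
    (i : Fin D) (m : Fin M) : ℝ :=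
  (∑ j, (a i j m * V j m) ^ 2) + σ i ^ 2

/-- The MMSE receive scalars, that is, the minimizers of the mean-square errors for given `V`. -/
noncomputable def mmseReceiver (a : Fin D → Fin D → Fin M → ℝ) (σ : Fin D → ℝ)
    (V : Fin D → Fin M → ℝ) (i : Fin D) (m : Fin M) : ℝ :=
  a i i m * V i m / receivedPower a σ V i m

/-- The weights `1 / e_i^m`, with the errors `e_i^m` those of the MMSE receiver. -/
noncomputable def mmseWeight (a : Fin D → Fin D → Fin M → ℝ) (σ : Fin D → ℝ)
    (V : Fin D → Fin M → ℝ) (i : Fin D) (m : Fin M) : ℝ :=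
  1 / mse D M a σ (mmseReceiver a σ V) V i m

theorem interferenceNoise_pos (hσ : σ i ≠ 0) : 0 < interferenceNoise a σ V i m := by
  unfold interferenceNoise
  positivity

theorem receivedPower_pos (hσ : σ i ≠ 0) : 0 < receivedPower a σ V i m := by
  unfold receivedPower
  positivity

theorem receivedPower_eq_interferenceNoise_add :
    receivedPower a σ V i m = interferenceNoise a σ V i m + (a i i m * V i m) ^ 2 := by
  rw [receivedPower, interferenceNoise, ← Finset.sum_erase_add _ _ (Finset.mem_univ i),
    add_right_comm]

theorem mse_eq_mul_sq_sub_add (hσ : σ i ≠ 0) :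
    mse D M a σ U V i m =
      receivedPower a σ V i m * (U i m - mmseReceiver a σ V i m) ^ 2 +
        interferenceNoise a σ V i m / receivedPower a σ V i m := by
  have hJ := (receivedPower_pos a V m hσ).ne'
  rw [receivedPower_eq_interferenceNoise_add] at hJ
  rw [mmseReceiver, receivedPower_eq_interferenceNoise_add, ← sq_mul_sub_one_add_sq_mul_eq hJ]
  simp only [mse, interferenceNoise, mul_add, Finset.mul_sum, mul_pow, mul_assoc, add_assoc]

theorem mse_mmseReceiver (hσ : σ i ≠ 0) :
    mse D M a σ (mmseReceiver a σ V) V i m =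
      interferenceNoise a σ V i m / receivedPower a σ V i m := by
  simp [mse_eq_mul_sq_sub_add a _ V m hσ]

theorem mse_mmseReceiver_pos (hσ : σ i ≠ 0) : 0 < mse D M a σ (mmseReceiver a σ V) V i m := by
  rw [mse_mmseReceiver a V m hσ]
  exact div_pos (interferenceNoise_pos a V m hσ) (receivedPower_pos a V m hσ)

theorem mse_mmseReceiver_le (hσ : σ i ≠ 0) :
    mse D M a σ (mmseReceiver a σ V) V i m ≤ mse D M a σ U V i m := by
  rw [mse_mmseReceiver a V m hσ, mse_eq_mul_sq_sub_add a U V m hσ]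
  exact le_add_of_nonneg_left (mul_nonneg (receivedPower_pos a V m hσ).le (sq_nonneg _))

theorem mmseWeight_pos (hσ : σ i ≠ 0) : 0 < mmseWeight a σ V i m :=
  one_div_pos.2 (mse_mmseReceiver_pos a V m hσ)

theorem rate_sq_eq_neg_log_mse_mmseReceiver (hσ : σ i ≠ 0) :
    rate D M a σ (fun i m => V i m ^ 2) i m =
      -Real.log (mse D M a σ (mmseReceiver a σ V) V i m) := by
  rw [mse_mmseReceiver a V m hσ, ← Real.log_inv, inv_div, receivedPower_eq_interferenceNoise_add,
    add_div, div_self (interferenceNoise_pos a V m hσ).ne']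
  simp only [rate, interferenceNoise, mul_pow]

theorem one_sub_rate_le_mul_mse_sub_log {W : Fin D → Fin M → ℝ} (hσ : σ i ≠ 0)
    (hW : 0 < W i m) :
    1 - rate D M a σ (fun i m => V i m ^ 2) i m ≤
      W i m * mse D M a σ U V i m - Real.log (W i m) := by
  have hpos := mse_mmseReceiver_pos a V m hσ
  have hle := mse_mmseReceiver_le a U V m hσ
  calc 1 - rate D M a σ (fun i m => V i m ^ 2) i m
      = 1 + Real.log (mse D M a σ (mmseReceiver a σ V) V i m) := by
        rw [rate_sq_eq_neg_log_mse_mmseReceiver a V m hσ, sub_neg_eq_add]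
    _ ≤ 1 + Real.log (mse D M a σ U V i m) := by gcongr
    _ ≤ W i m * mse D M a σ U V i m - Real.log (W i m) :=
        one_add_log_le_mul_sub_log hW (hpos.trans_le hle)

theorem mmseWeight_mul_mse_sub_log (hσ : σ i ≠ 0) :
    mmseWeight a σ V i m * mse D M a σ (mmseReceiver a σ V) V i m -
        Real.log (mmseWeight a σ V i m) =
      1 - rate D M a σ (fun i m => V i m ^ 2) i m := by
  rw [mmseWeight, one_div_mul_cancel (mse_mmseReceiver_pos a V m hσ).ne', one_div, Real.log_inv,
    rate_sq_eq_neg_log_mse_mmseReceiver a V m hσ]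

end Link

section Problem

variable {D M : ℕ} {a : Fin D → Fin D → Fin M → ℝ} {σ α : Fin D → ℝ} {Pmax : ℝ}
  {Rmin : Fin D → ℝ} {W U V : Fin D → Fin M → ℝ}

theorem sum_mul_one_sub_rate (P : Fin D → Fin M → ℝ) :
    ∑ i, ∑ m, α i * (1 - rate D M a σ P i m) = M * ∑ i, α i - objG D M a σ α P := by
  rw [objG, Finset.sum_comm (s := (Finset.univ : Finset (Fin M)))]
  simp [mul_sub, Finset.sum_sub_distrib, Finset.mul_sum]

theorem Feas10.feas6_sq (hσ : ∀ i, σ i ≠ 0) (h : Feas10 D M a σ Pmax Rmin W U V) :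
    Feas6 D M a σ Pmax Rmin (fun i m => V i m ^ 2) := by
  obtain ⟨hW, hpower, hmse⟩ := h
  refine ⟨fun i m => sq_nonneg _, hpower, fun i => ?_⟩
  have hsum := Finset.sum_le_sum fun m (_ : m ∈ Finset.univ) =>
    one_sub_rate_le_mul_mse_sub_log a U V m (hσ i) (hW i m)
  simp only [Finset.sum_sub_distrib, Fin.sum_const, nsmul_eq_mul, mul_one] at hsum
  linarith [hmse i]

theorem Feas6.feas10_mmse (hσ : ∀ i, σ i ≠ 0)
    (h : Feas6 D M a σ Pmax Rmin (fun i m => V i m ^ 2)) :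
    Feas10 D M a σ Pmax Rmin (mmseWeight a σ V) (mmseReceiver a σ V) V := by
  obtain ⟨-, hpower, hrate⟩ := h
  refine ⟨fun i m => mmseWeight_pos a V m (hσ i), hpower, fun i => ?_⟩
  have hsum := Finset.sum_congr rfl fun m (_ : m ∈ Finset.univ) =>
    mmseWeight_mul_mse_sub_log a V m (hσ i)
  simp only [Finset.sum_sub_distrib, Fin.sum_const, nsmul_eq_mul, mul_one] at hsum
  linarith [hrate i]

theorem sub_objG_sq_le_objF (hσ : ∀ i, σ i ≠ 0) (hα : ∀ i, 0 ≤ α i) (hW : ∀ i m, 0 < W i m) :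
    M * ∑ i, α i - objG D M a σ α (fun i m => V i m ^ 2) ≤ objF D M a σ α W U V := by
  rw [← sum_mul_one_sub_rate]
  exact Finset.sum_le_sum fun i _ => Finset.sum_le_sum fun m _ =>
    mul_le_mul_of_nonneg_left (one_sub_rate_le_mul_mse_sub_log a U V m (hσ i) (hW i m)) (hα i)

theorem objF_mmse (hσ : ∀ i, σ i ≠ 0) :
    objF D M a σ α (mmseWeight a σ V) (mmseReceiver a σ V) V =
      M * ∑ i, α i - objG D M a σ α (fun i m => V i m ^ 2) := by
  simp only [← sum_mul_one_sub_rate, objF, mmseWeight_mul_mse_sub_log a V _ (hσ _)]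

end Problem

theorem wmmse_rate_equivalence_general {D M : ℕ} (a : Fin D → Fin D → Fin M → ℝ)
    {σ : Fin D → ℝ} (hσ : ∀ i, σ i ≠ 0) {α : Fin D → ℝ} (hα : ∀ i, 0 ≤ α i)
    (Pmax : ℝ) (Rmin : Fin D → ℝ) :
    (∀ W U V : Fin D → Fin M → ℝ,
      Feas10 D M a σ Pmax Rmin W U V →
      (∀ W' U' V', Feas10 D M a σ Pmax Rmin W' U' V' →
        objF D M a σ α W U V ≤ objF D M a σ α W' U' V') →
      Feas6 D M a σ Pmax Rmin (fun i m => V i m ^ 2) ∧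
        ∀ P, Feas6 D M a σ Pmax Rmin P →
          objG D M a σ α P ≤ objG D M a σ α (fun i m => V i m ^ 2)) ∧
    (∀ P : Fin D → Fin M → ℝ,
      Feas6 D M a σ Pmax Rmin P →
      (∀ P', Feas6 D M a σ Pmax Rmin P' → objG D M a σ α P' ≤ objG D M a σ α P) →
      ∀ W U V : Fin D → Fin M → ℝ,
        (∀ i m, P i m = V i m ^ 2) →
        (∀ i m, U i m = mmseReceiver a σ V i m) →
        (∀ i m, W i m = 1 / mse D M a σ U V i m) →
        Feas10 D M a σ Pmax Rmin W U V ∧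
          ∀ W' U' V', Feas10 D M a σ Pmax Rmin W' U' V' →
            objF D M a σ α W U V ≤ objF D M a σ α W' U' V') := by
  constructor
  · intro W U V hfeas hmin
    refine ⟨hfeas.feas6_sq hσ, fun P hP => ?_⟩
    obtain ⟨V', rfl⟩ : ∃ V' : Fin D → Fin M → ℝ, P = fun i m => V' i m ^ 2 :=
      ⟨fun i m => √(P i m), funext₂ fun i m => (Real.sq_sqrt (hP.1 i m)).symm⟩
    refine (sub_le_sub_iff_left (M * ∑ i, α i)).1 ?_
    calc M * ∑ i, α i - objG D M a σ α (fun i m => V i m ^ 2)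
        ≤ objF D M a σ α W U V := sub_objG_sq_le_objF hσ hα hfeas.1
      _ ≤ objF D M a σ α (mmseWeight a σ V') (mmseReceiver a σ V') V' :=
          hmin _ _ _ (hP.feas10_mmse hσ)
      _ = M * ∑ i, α i - objG D M a σ α (fun i m => V' i m ^ 2) := objF_mmse hσ
  · intro P hP hmax W U V hV hU hW
    obtain rfl : P = fun i m => V i m ^ 2 := funext₂ hV
    obtain rfl : U = mmseReceiver a σ V := funext₂ hU
    obtain rfl : W = mmseWeight a σ V := funext₂ hW
    refine ⟨hP.feas10_mmse hσ, fun W' U' V' hfeas => ?_⟩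
    calc objF D M a σ α (mmseWeight a σ V) (mmseReceiver a σ V) V
        = M * ∑ i, α i - objG D M a σ α (fun i m => V i m ^ 2) := objF_mmse hσ
      _ ≤ M * ∑ i, α i - objG D M a σ α (fun i m => V' i m ^ 2) :=
          sub_le_sub_left (hmax _ (hfeas.feas6_sq hσ)) _
      _ ≤ objF D M a σ α W' U' V' := sub_objG_sq_le_objF hσ hα hfeas.1

/-- Theorem 1: equivalence of the weighted sum-MSE problem (10) and the simplified
sum-rate problem (6): (a) the squared `V`-part of a global minimizer of (10) is a
global maximizer of (6); (b) conversely, the WMMSE variables built from a global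
maximizer of (6) form a global minimizer of (10). -/
theorem wmmse_rate_equivalence
    (D M : ℕ) (hD : 0 < D) (hM : 0 < M)
    (a : Fin D → Fin D → Fin M → ℝ) (ha : ∀ i j m, 0 ≤ a i j m)
    (σ : Fin D → ℝ) (hσ : ∀ i, 0 < σ i)
    (α : Fin D → ℝ) (hα : ∀ i, 0 < α i)
    (Pmax : ℝ) (hPmax : 0 < Pmax)
    (Rmin : Fin D → ℝ) (hRmin : ∀ i, 0 ≤ Rmin i) :
    (∀ Wstar Ustar Vstar : Fin D → Fin M → ℝ,
      Feas10 D M a σ Pmax Rmin Wstar Ustar Vstar →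
      (∀ W U V, Feas10 D M a σ Pmax Rmin W U V →
        objF D M a σ α Wstar Ustar Vstar ≤ objF D M a σ α W U V) →
      (Feas6 D M a σ Pmax Rmin (fun i m => (Vstar i m) ^ 2) ∧
        ∀ P, Feas6 D M a σ Pmax Rmin P →
          objG D M a σ α P ≤ objG D M a σ α (fun i m => (Vstar i m) ^ 2))) ∧
    (∀ Pstar : Fin D → Fin M → ℝ,
      Feas6 D M a σ Pmax Rmin Pstar →
      (∀ P, Feas6 D M a σ Pmax Rmin P →
        objG D M a σ α P ≤ objG D M a σ α Pstar) →
      ∀ W U V : Fin D → Fin M → ℝ,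
        (∀ i m, V i m = Real.sqrt (Pstar i m)) →
        (∀ i m, U i m = a i i m * V i m /
          ((∑ j, (a i j m * V j m) ^ 2) + (σ i) ^ 2)) →
        (∀ i m, W i m = 1 / mse D M a σ U V i m) →
        (Feas10 D M a σ Pmax Rmin W U V ∧
          ∀ W' U' V', Feas10 D M a σ Pmax Rmin W' U' V' →
            objF D M a σ α W U V ≤ objF D M a σ α W' U' V')) := by
  refine (wmmse_rate_equivalence_general a (fun i => (hσ i).ne') (fun i => (hα i).le)
    Pmax Rmin).imp_right fun h P hP hmax W U V hV => h P hP hmax W U V fun i m => ?_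
  rw [hV, Real.sq_sqrt (hP.1 i m)]
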